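/- A semicomplete multipartite digraph has a Hamilton (directed) path if and only if it contains a 1-path-cycle factor. -/

import Mathlib

/-- `A` is a semicomplete multipartite digraph with partition map `part`: there are no
loops, and two vertices are joined by at least one arc iff they are in different
partite sets. -/
def IsSemicompleteMultipartite {V : Type*} {p : ℕ} (A : V → V → Prop)
    (part : V → Fin p) : Prop :=
  (∀ v, ¬ A v v) ∧ ∀ u v : V, (A u v ∨ A v u) ↔ part u ≠ part v

/-- `e` lists the vertices of a Hamilton oriented cycle of the digraph `A`. -/
def IsHamOrientedCycle {V : Type*} [Fintype V] (A : V → V → Prop)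
    (e : ZMod (Fintype.card V) ≃ V) : Prop :=
  ∀ i, A (e i) (e (i + 1)) ∨ A (e (i + 1)) (e i)

/-- `f` lists the vertices of a Hamilton oriented path of the digraph `A`. -/
def IsHamOrientedPath {V : Type*} [Fintype V] (A : V → V → Prop)
    (f : Fin (Fintype.card V) ≃ V) : Prop :=
  ∀ i : ℕ, ∀ h : i + 1 < Fintype.card V,
    A (f ⟨i, Nat.lt_of_succ_lt h⟩) (f ⟨i + 1, h⟩) ∨
      A (f ⟨i + 1, h⟩) (f ⟨i, Nat.lt_of_succ_lt h⟩)

/-- `f` lists the vertices of a Hamilton (directed) path of the digraph `A`. -/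
def IsHamDipath {V : Type*} [Fintype V] (A : V → V → Prop)
    (f : Fin (Fintype.card V) ≃ V) : Prop :=
  ∀ i : ℕ, ∀ h : i + 1 < Fintype.card V,
    A (f ⟨i, Nat.lt_of_succ_lt h⟩) (f ⟨i + 1, h⟩)

/-- Out-degree of `v` in the digraph `F`. -/
noncomputable def outdeg {V : Type*} [Fintype V] (F : V → V → Prop) (v : V) : ℕ :=
  Nat.card {u : V // F v u}

/-- In-degree of `v` in the digraph `F`. -/
noncomputable def indeg {V : Type*} [Fintype V] (F : V → V → Prop) (v : V) : ℕ :=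
  Nat.card {u : V // F u v}

/-- `F` is a 1-path-cycle factor of the digraph `A`: a spanning subdigraph in which
every vertex has in- and out-degree at most one, with exactly one vertex of in-degree 0
and exactly one vertex of out-degree 0; such a subdigraph consists of one directed path
together with a vertex-disjoint collection of directed cycles, covering all vertices. -/
def IsOnePathCycleFactor {V : Type*} [Fintype V] (A F : V → V → Prop) : Prop :=
  (∀ u v, F u v → A u v) ∧ (∀ v, outdeg F v ≤ 1 ∧ indeg F v ≤ 1) ∧
    (∃! s, indeg F s = 0) ∧ (∃! t, outdeg F t = 0)

/-! The vertex set is enlarged by one vertex `∞` joined in both directions to every other vertex;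
the digraph stays semicomplete multipartite. A 1-path-cycle factor of the original digraph is the
same as a permutation `σ` of the enlarged vertex set with an arc from every vertex `v` to `σ v`,
and a Hamilton path is such a permutation with a single cycle. So it suffices to show that, if `σ`
has a cycle `C` besides the cycle `X` of `∞`, the two can be merged.

Two merges are tried: exchange the successors of some `x ∈ X` and `c ∈ C`, or reroute four arcs
along `x → σ c`, `c → σ y`, `y → σ d`, `d → σ x` with `x, y ∈ X` and `c, d ∈ C`. Suppose
neither is possible. Walking along `X` from `∞`, choose the last `y` with an arc into `C`, and let
`Z` be the partite set of `σ y`. Going backwards along `X` from `y`, one finds that every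
out-neighbour in `C` of a vertex of `X` is the successor of a vertex of `Z`. For `∞` this means
`C ⊆ Z`, although consecutive vertices of `C` are in different partite sets. -/

open Equiv.Perm (SameCycle)
open Equiv (Perm swap)

section Walk

variable {V : Type*} [Finite V] {σ : Perm V} {P : V → Prop} {a b : V}

-- For `a ≠ b` the walk leaving `a` meets `b` before returning to `a`; for `a = b` it is the whole
-- cycle. In both cases the step condition is not needed at `a` or `b`.
theorem of_sameCycle_of_apply (hab : σ.SameCycle a b) (ha : P (σ a))
    (step : ∀ u, σ.SameCycle a u → u ≠ a → u ≠ b → P u → P (σ u)) : P b := by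
  classical
  obtain ⟨n, hn, hmin⟩ : ∃ n, (σ ^ (n + 1)) a = b ∧ ∀ m < n, (σ ^ (m + 1)) a ≠ b := by
    obtain ⟨n, hn, -, h⟩ := hab.exists_pow_eq''
    have hex : ∃ n, (σ ^ (n + 1)) a = b := ⟨n - 1, by rwa [Nat.sub_add_cancel hn]⟩
    exact ⟨Nat.find hex, Nat.find_spec hex, fun _ => Nat.find_min hex⟩
  have before : ∀ m ≤ n, P ((σ ^ (m + 1)) a) := by
    intro m
    induction m with
    | zero => exact fun _ => ha
    | succ m ih =>
      intro hm
      rw [pow_succ', Equiv.Perm.mul_apply]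
      refine step _ (Equiv.Perm.sameCycle_pow_right.2 .rfl) (fun hback => ?_) (hmin m hm)
        (ih (by lia))
      refine hmin (n - (m + 1)) (by lia) ?_
      rw [← hn, show n + 1 = n - (m + 1) + 1 + (m + 1) by lia, pow_add _ _ (m + 1),
        Equiv.Perm.mul_apply, hback]
  exact hn ▸ before n le_rfl

theorem of_sameCycle (hab : σ.SameCycle a b) (ha : P a)
    (step : ∀ u, σ.SameCycle a u → P u → P (σ u)) : P b :=
  of_sameCycle_of_apply hab (step a .rfl ha) fun u hu _ _ => step u hu

end Walk

section Merge

variable {V : Type*} {A : V → V → Prop} {σ : Perm V} {x y c d : V}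

/-- A cycle factor of the digraph `A`, encoded as the permutation sending each vertex to its
successor: the cycles of the permutation are the cycles of the factor. -/
def IsCycleFactor (A : V → V → Prop) (σ : Perm V) : Prop :=
  ∀ v, A v (σ v)

/-- The arcs of the digraph `A` needed to replace the `σ`-successors of `x`, `c`, `y`, `d` by
`σ c`, `σ y`, `σ d`, `σ x`; this merges the `σ`-cycle of `x` and `y` with that of `c` and `d`. The
case `x = y`, `c = d`, where the successors of `x` and `c` are exchanged, is allowed. -/
structure IsMergingQuadruple (A : V → V → Prop) (σ : Perm V) (x y c d : V) : Prop where
  eq_iff_eq : x = y ↔ c = d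
  arc_x : A x (σ c)
  arc_c : A c (σ y)
  arc_y : A y (σ d)
  arc_d : A d (σ x)

theorem exists_perm_reroute (σ : Perm V) (hxy : x = y ↔ c = d)
    (hxc : x ≠ c) (hxd : x ≠ d) (hyc : y ≠ c) (hyd : y ≠ d) :
    ∃ τ : Perm V, τ x = σ c ∧ τ c = σ y ∧ τ y = σ d ∧ τ d = σ x ∧
      ∀ u, u = x ∨ u = y ∨ u = c ∨ u = d ∨ τ u = σ u := by
  classical
  refine ⟨σ * (swap x c * swap c y * swap y d), ?_⟩
  simp only [Equiv.Perm.mul_apply, EmbeddingLike.apply_eq_iff_eq, Equiv.swap_apply_def]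
  grind

theorem sameCycle_of_reroute [Finite V] {τ : Perm V} {u : V} (hxy : σ.SameCycle x y)
    (hcd : σ.SameCycle c d) (hxc : ¬ σ.SameCycle x c)
    (τx : τ x = σ c) (τc : τ c = σ y) (τy : τ y = σ d) (τd : τ d = σ x)
    (τσ : ∀ u, u = x ∨ u = y ∨ u = c ∨ u = d ∨ τ u = σ u)
    (hu : σ.SameCycle x u ∨ σ.SameCycle c u) : τ.SameCycle x u := by
  have step : ∀ u, u ≠ x → u ≠ y → u ≠ c → u ≠ d → τ.SameCycle x u → τ.SameCycle x (σ u) := by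
    intro u h₁ h₂ h₃ h₄ h
    have hu : τ u = σ u := by simpa only [h₁, h₂, h₃, h₄, false_or] using τσ u
    exact hu ▸ h.apply_right
  have ne_of_x : ∀ u, σ.SameCycle x u → u ≠ c ∧ u ≠ d := fun u h =>
    ⟨fun e => hxc (e ▸ h), fun e => hxc ((e ▸ h).trans hcd.symm)⟩
  have ne_of_c : ∀ u, σ.SameCycle c u → u ≠ x ∧ u ≠ y := fun u h =>
    ⟨fun e => hxc (e ▸ h).symm, fun e => hxc (hxy.trans (e ▸ h).symm)⟩
  have hσc : τ.SameCycle x (σ c) := τx ▸ SameCycle.rfl.apply_right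
  have hd : τ.SameCycle x d := of_sameCycle_of_apply hcd hσc fun u hu hc hd =>
    step u (ne_of_c u hu).1 (ne_of_c u hu).2 hc hd
  have hσx : τ.SameCycle x (σ x) := τd ▸ hd.apply_right
  have hy : τ.SameCycle x y := of_sameCycle_of_apply hxy hσx fun u hu hx hy =>
    step u hx hy (ne_of_x u hu).1 (ne_of_x u hu).2
  have hσd : τ.SameCycle x (σ d) := τy ▸ hy.apply_right
  have hc : τ.SameCycle x c := of_sameCycle_of_apply hcd.symm hσd fun u hu hd hc =>
    step u (ne_of_c u (hcd.trans hu)).1 (ne_of_c u (hcd.trans hu)).2 hc hd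
  have hσy : τ.SameCycle x (σ y) := τc ▸ hc.apply_right
  have closed : ∀ u, τ.SameCycle x u → τ.SameCycle x (σ u) := by
    intro u hu
    rcases τσ u with rfl | rfl | rfl | rfl | h
    exacts [hσx, hσy, hσc, hσd, h ▸ hu.apply_right]
  rcases hu with hu | hu
  · exact of_sameCycle hu .rfl fun u _ => closed u
  · exact of_sameCycle hu hc fun u _ => closed u

theorem IsCycleFactor.exists_merge [Finite V] (hσ : IsCycleFactor A σ) (hxy : σ.SameCycle x y)
    (hcd : σ.SameCycle c d) (hxc : ¬ σ.SameCycle x c) (h : IsMergingQuadruple A σ x y c d) :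
    ∃ τ, IsCycleFactor A τ ∧ ∀ u, σ.SameCycle x u ∨ σ.SameCycle c u → τ.SameCycle x u := by
  have hxd : ¬ σ.SameCycle x d := fun h => hxc (h.trans hcd.symm)
  obtain ⟨τ, τx, τc, τy, τd, τσ⟩ := exists_perm_reroute σ h.eq_iff_eq
    (fun e => hxc (e ▸ .rfl)) (fun e => hxd (e ▸ .rfl))
    (fun e => hxc (e ▸ hxy)) (fun e => hxd (e ▸ hxy))
  refine ⟨τ, fun u => ?_, fun u => sameCycle_of_reroute hxy hcd hxc τx τc τy τd τσ⟩
  rcases τσ u with rfl | rfl | rfl | rfl | hu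
  exacts [τx ▸ h.arc_x, τy ▸ h.arc_y, τc ▸ h.arc_c, τd ▸ h.arc_d, hu ▸ hσ u]

end Merge

section SemicompleteMultipartite

variable {V ι : Type*} {A : V → V → Prop} {part : V → ι} {σ : Perm V} {r v : V}

/-- Every out-neighbour of `u` on the `σ`-cycle of `v` is the `σ`-successor of a vertex in the
partite set `z`; the invariant that is propagated along a cycle that cannot be merged. -/
def OutNeighborsFollow (A : V → V → Prop) (part : V → ι) (σ : Perm V) (v : V) (z : ι) (u : V) :
    Prop :=
  ∀ c, σ.SameCycle v c → A u (σ c) → part c = z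

theorem part_ne_part_of_arc (hA : ∀ u v, A u v ∨ A v u ↔ part u ≠ part v) {u v : V}
    (h : A u v) : part u ≠ part v :=
  (hA u v).1 (.inl h)

theorem OutNeighborsFollow.arc (hA : ∀ u v, A u v ∨ A v u ↔ part u ≠ part v)
    (hσ : IsCycleFactor A σ) {u c : V} {z : ι} (hu : OutNeighborsFollow A part σ v z u)
    (huz : part u ≠ z) (hc : σ.SameCycle v c) (hcz : part c = z) : A c u := by
  refine ((hA c u).2 (hcz ▸ huz.symm)).resolve_right fun huc => ?_
  have hpred : part (σ.symm c) = z := hu _ (by simpa using hc) (by simpa using huc)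
  have : A (σ.symm c) c := by simpa using hσ (σ.symm c)
  exact part_ne_part_of_arc hA this (hpred.trans hcz.symm)

theorem exists_last_outArc [Finite V] (hr : ∀ c, σ.SameCycle v c → A r c ∧ A c r)
    (hno : ∀ x c, σ.SameCycle r x → σ.SameCycle v c → ¬ IsMergingQuadruple A σ x x c c) :
    ∃ y, σ.SameCycle r y ∧ (∃ d, σ.SameCycle v d ∧ A y (σ d)) ∧
      ∀ c, σ.SameCycle v c → ¬ A (σ y) c := by
  by_contra! hcon
  obtain ⟨c, hc, hrc⟩ : ∃ c, σ.SameCycle v c ∧ A (σ.symm r) (σ c) := by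
    refine of_sameCycle (P := fun x => ∃ c, σ.SameCycle v c ∧ A x (σ c))
      (SameCycle.rfl.symm_apply_right) ⟨v, .rfl, (hr _ SameCycle.rfl.apply_right).1⟩
      fun x hx hout => ?_
    obtain ⟨c, hc, hxc⟩ := hcon x hx hout
    exact ⟨σ.symm c, by simpa using hc, by simpa using hxc⟩
  have hcr : A c (σ (σ.symm r)) := by simpa using (hr c hc).2
  exact hno (σ.symm r) c SameCycle.rfl.symm_apply_right hc ⟨by simp, hrc, hcr, hrc, hcr⟩

theorem OutNeighborsFollow.of_apply (hA : ∀ u v, A u v ∨ A v u ↔ part u ≠ part v)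
    (hσ : IsCycleFactor A σ)
    (hno : ∀ x y c d, σ.SameCycle r x → σ.SameCycle r y → σ.SameCycle v c → σ.SameCycle v d →
      ¬ IsMergingQuadruple A σ x y c d)
    {x y d : V} (hx : σ.SameCycle r x) (hy : σ.SameCycle r y) (hd : σ.SameCycle v d)
    (hyd : A y (σ d)) (hσy : ∀ c, σ.SameCycle v c → ¬ A (σ y) c)
    (hyz : OutNeighborsFollow A part σ v (part (σ y)) y)
    (h₁ : OutNeighborsFollow A part σ v (part (σ y)) (σ x))
    (h₂ : OutNeighborsFollow A part σ v (part (σ y)) (σ (σ x))) :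
    OutNeighborsFollow A part σ v (part (σ y)) x := by
  intro c hc hxc
  by_contra hcz
  have hno₂ : ∀ {x c}, σ.SameCycle r x → σ.SameCycle v c → A x (σ c) → ¬ A c (σ x) :=
    fun hx hc hxc hcx => hno _ _ _ _ hx hx hc hc ⟨by simp, hxc, hcx, hxc, hcx⟩
  by_cases hxz : part (σ x) = part (σ y)
  · have hxc' : A (σ x) (σ (σ.symm c)) := by
      simpa using ((hA (σ x) c).2 (hxz ▸ Ne.symm hcz)).resolve_right (hno₂ hx hc hxc)
    have hc' : σ.SameCycle v (σ.symm c) := by simpa using hc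
    have hne : part (σ (σ x)) ≠ part (σ y) := hxz ▸ (part_ne_part_of_arc hA (hσ (σ x))).symm
    exact hno₂ hx.apply_right hc' hxc' (h₂.arc hA hσ hne hc' (h₁ _ hc' hxc'))
  · have hcy : A c (σ y) := ((hA c (σ y)).2 hcz).resolve_right (hσy c hc)
    have hdz : part d = part (σ y) := hyz d hd hyd
    have hxy : x ≠ y := by
      rintro rfl
      exact hno₂ hx hc hxc hcy
    have hcd : c ≠ d := fun e => hcz (e ▸ hdz)
    exact hno x y c d hx hy hc hd
      ⟨by simp [hxy, hcd], hxc, hcy, hyd, h₁.arc hA hσ hxz hd hdz⟩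

theorem exists_isMergingQuadruple [Finite V] (hA : ∀ u v, A u v ∨ A v u ↔ part u ≠ part v)
    (hσ : IsCycleFactor A σ) (hr : ∀ c, σ.SameCycle v c → A r c ∧ A c r) :
    ∃ x y c d, σ.SameCycle r x ∧ σ.SameCycle r y ∧ σ.SameCycle v c ∧ σ.SameCycle v d ∧
      IsMergingQuadruple A σ x y c d := by
  by_contra! hno
  obtain ⟨y, hy, ⟨d, hd, hyd⟩, hσy⟩ :=
    exists_last_outArc hr fun x c hx hc => hno x x c c hx hx hc hc
  let Follow := OutNeighborsFollow A part σ v (part (σ y))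
  have base : Follow y := by
    intro c hc hyc
    by_contra hcz
    have hcy : A c (σ y) := ((hA c (σ y)).2 hcz).resolve_right (hσy c hc)
    exact hno y y c c hy hy hc hc ⟨by simp, hyc, hcy, hyc, hcy⟩
  have base' : Follow (σ y) := fun c hc h => absurd h (hσy _ hc.apply_right)
  have follow_r : Follow r ∧ Follow (σ r) := by
    refine of_sameCycle (P := fun x => Follow x ∧ Follow (σ x)) hy.symm.inv ⟨base, base'⟩
      fun x hx ⟨h₁, h₂⟩ => ?_
    have hx' : σ.SameCycle r (σ⁻¹ x) := by simpa using hy.trans hx.of_inv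
    have h : Follow (σ⁻¹ x) := .of_apply hA hσ hno hx' hy hd hyd hσy base
      (by simpa using h₁) (by simpa using h₂)
    exact ⟨h, by simpa using h₁⟩
  have part_eq : ∀ c, σ.SameCycle v c → part c = part (σ y) := fun c hc =>
    follow_r.1 c hc (hr _ hc.apply_right).1
  exact part_ne_part_of_arc hA (hσ v)
    ((part_eq v .rfl).trans (part_eq (σ v) SameCycle.rfl.apply_right).symm)

theorem exists_isCycleFactor_forall_sameCycle [Finite V]
    (hA : ∀ u v, A u v ∨ A v u ↔ part u ≠ part v) (hr : ∀ w ≠ r, A r w ∧ A w r)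
    (hσ : IsCycleFactor A σ) :
    ∃ τ, IsCycleFactor A τ ∧ ∀ w, τ.SameCycle r w := by
  obtain ⟨σ, hσ, hmax⟩ := Set.Finite.exists_maximalFor (fun σ : Perm V => {w | σ.SameCycle r w})
    {σ | IsCycleFactor A σ} (Set.toFinite _) ⟨σ, hσ⟩
  refine ⟨σ, hσ, fun v => ?_⟩
  by_contra hv
  obtain ⟨x, y, c, d, hx, hy, hc, hd, h⟩ := exists_isMergingQuadruple (r := r) (v := v) hA hσ
    fun c hc => hr c fun e => hv (e ▸ hc).symm
  obtain ⟨τ, hτ, hmerge⟩ := hσ.exists_merge (hx.symm.trans hy) (hc.symm.trans hd)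
    (fun hxc => hv (hx.trans (hxc.trans hc.symm))) h
  have hτr : τ.SameCycle r x := (hmerge r (.inl hx.symm)).symm
  have hle : {w | σ.SameCycle r w} ⊆ {w | τ.SameCycle r w} := fun w hw =>
    hτr.trans (hmerge w (.inl (hx.symm.trans hw)))
  exact hv (hmax hτ hle (hτr.trans (hmerge v (.inr hc.symm))))

end SemicompleteMultipartite

section Cone

variable {V : Type*} {A : V → V → Prop}

/-- The digraph `A` with an additional vertex `none`, joined to and from every vertex of `A`. It
turns paths of `A` into cycles through `none`. -/
def cone (A : V → V → Prop) : Option V → Option V → Prop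
  | some u, some v => A u v
  | none, none => False
  | _, _ => True

theorem cone_or_cone_iff {ι : Type*} {part : V → ι}
    (hA : ∀ u v, A u v ∨ A v u ↔ part u ≠ part v) (u v : Option V) :
    cone A u v ∨ cone A v u ↔ u.map part ≠ v.map part := by
  cases u <;> cases v <;> simp [cone, hA]

theorem cone_none_of_ne {w : Option V} (hw : w ≠ none) : cone A none w ∧ cone A w none := by
  cases w <;> simp_all [cone]

theorem exists_equiv_apply_eq_pow {W : Type*} [Fintype W] {n : ℕ} (hn : Fintype.card W = n)
    {σ : Perm W} {r : W} (h : ∀ w, σ.SameCycle r w) :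
    ∃ e : Fin n ≃ W, ∀ i : Fin n, e i = (σ ^ (i : ℕ)) r := by
  have hcycle : σ.IsCycleOn (Finset.univ : Finset W) :=
    ⟨by simp, fun u _ w _ => (h u).symm.trans (h w)⟩
  have hsurj : Function.Surjective fun i : Fin n => (σ ^ (i : ℕ)) r := fun w => by
    obtain ⟨i, hi, hiw⟩ := hcycle.exists_pow_eq (Finset.mem_univ r) (Finset.mem_univ w)
    exact ⟨⟨i, by simpa [hn] using hi⟩, hiw⟩
  exact ⟨.ofBijective _ ((Fintype.bijective_iff_surjective_and_card _).2 ⟨hsurj, by simp [hn]⟩),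
    fun _ => rfl⟩

theorem exists_isHamDipath_of_forall_sameCycle [Fintype V] {σ : Perm (Option V)}
    (hσ : IsCycleFactor (cone A) σ) (h : ∀ w, σ.SameCycle none w) :
    ∃ f : Fin (Fintype.card V) ≃ V, IsHamDipath A f := by
  obtain ⟨e, he⟩ := exists_equiv_apply_eq_pow (Fintype.card_option (α := V)) h
  let e' : Option (Fin (Fintype.card V)) ≃ Option V := (finSuccEquiv _).symm.trans e
  have he' : ∀ i : Fin (Fintype.card V), some (e'.removeNone i) = (σ ^ (i + 1 : ℕ)) none := by
    intro i
    have hne : e' (some i) ≠ e' none := by simp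
    rw [show e' none = none by simp [e', he]] at hne
    rw [Equiv.removeNone_some _ (Option.ne_none_iff_exists'.1 hne)]
    simp [e', he]
  refine ⟨e'.removeNone, fun i hi => ?_⟩
  have hsucc : σ (some (e'.removeNone ⟨i, Nat.lt_of_succ_lt hi⟩)) =
      some (e'.removeNone ⟨i + 1, hi⟩) := by
    rw [he', he', ← Equiv.Perm.mul_apply, ← pow_succ']
  have harc := hσ (some (e'.removeNone ⟨i, Nat.lt_of_succ_lt hi⟩))
  rwa [hsucc] at harc

theorem IsHamDipath.exists_isCycleFactor_cone [Fintype V] [Nonempty V]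
    {f : Fin (Fintype.card V) ≃ V} (hf : IsHamDipath A f) :
    ∃ σ, IsCycleFactor (cone A) σ := by
  let e : Fin (Fintype.card V + 1) ≃ Option V := (finSuccEquiv _).trans f.optionCongr
  have he₀ : e 0 = none := rfl
  have he₁ : ∀ i : Fin (Fintype.card V), e i.succ = some (f i) := fun i => rfl
  refine ⟨e.permCongr (finRotate _), fun w => ?_⟩
  obtain ⟨i, rfl⟩ := e.surjective w
  rw [Equiv.permCongr_apply, Equiv.symm_apply_apply]
  induction i using Fin.lastCases with
  | last =>
    rw [finRotate_last, he₀]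
    refine (cone_none_of_ne fun h => ?_).2
    exact Fintype.card_ne_zero (α := V) (congrArg Fin.val (e.injective (h.trans he₀.symm)))
  | cast i =>
    rw [finRotate_apply, Fin.coeSucc_eq_succ, he₁]
    obtain ⟨i, hi⟩ := i
    cases i with
    | zero => exact trivial
    | succ i => exact hf i hi

end Cone

section Factor

variable {V : Type*} [Fintype V] {A F : V → V → Prop}

theorem indeg_eq_zero_iff {v : V} : indeg F v = 0 ↔ ∀ u, ¬ F u v := by
  rw [indeg, Finite.card_eq_zero_iff, isEmpty_subtype]

theorem outdeg_eq_zero_iff {v : V} : outdeg F v = 0 ↔ ∀ u, ¬ F v u := by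
  rw [outdeg, Finite.card_eq_zero_iff, isEmpty_subtype]

theorem indeg_le_one_iff {v : V} : indeg F v ≤ 1 ↔ ∀ u w, F u v → F w v → u = w := by
  rw [indeg, Finite.card_le_one_iff_subsingleton, subsingleton_iff]
  simp only [Subtype.forall, Subtype.mk.injEq]
  tauto

theorem outdeg_le_one_iff {v : V} : outdeg F v ≤ 1 ↔ ∀ u w, F v u → F v w → u = w := by
  rw [outdeg, Finite.card_le_one_iff_subsingleton, subsingleton_iff]
  simp only [Subtype.forall, Subtype.mk.injEq]
  tauto

theorem IsCycleFactor.isOnePathCycleFactor {σ : Perm (Option V)}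
    (hσ : IsCycleFactor (cone A) σ) :
    IsOnePathCycleFactor A fun u v => σ (some u) = some v := by
  have hin : ∀ v, indeg (fun u v => σ (some u) = some v) v = 0 ↔ σ none = some v := fun v => by
    refine indeg_eq_zero_iff.trans ⟨fun h => ?_, fun h u hu => ?_⟩
    · obtain ⟨_ | u, hu⟩ := σ.surjective (some v)
      exacts [hu, absurd hu (h u)]
    · cases σ.injective (h.trans hu.symm)
  have hout : ∀ v, outdeg (fun u v => σ (some u) = some v) v = 0 ↔ σ (some v) = none := fun v => by
    rw [outdeg_eq_zero_iff, Option.eq_none_iff_forall_ne_some]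
  have hnone : σ none ≠ none := fun h => by simpa only [h, cone] using hσ none
  refine ⟨fun u v h => ?_, fun v => ⟨?_, ?_⟩, ?_, ?_⟩
  · have harc := hσ (some u)
    rwa [h] at harc
  · exact outdeg_le_one_iff.2 fun u w hu hw => Option.some_injective _ (hu.symm.trans hw)
  · exact indeg_le_one_iff.2 fun u w hu hw =>
      Option.some_injective _ (σ.injective (hu.trans hw.symm))
  · simp only [hin]
    obtain ⟨s, hs⟩ := Option.ne_none_iff_exists'.1 hnone
    exact ⟨s, hs, fun v hv => Option.some_injective _ (hv.symm.trans hs)⟩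
  · simp only [hout]
    obtain ⟨_ | t, ht⟩ := σ.surjective none
    · exact absurd ht hnone
    · exact ⟨t, ht, fun v hv => Option.some_injective _ (σ.injective (hv.trans ht.symm))⟩

theorem IsOnePathCycleFactor.exists_isCycleFactor_cone (hF : IsOnePathCycleFactor A F) :
    ∃ σ, IsCycleFactor (cone A) σ := by
  classical
  obtain ⟨hFA, hdeg, ⟨s, hs, -⟩, ⟨t, -, ht⟩⟩ := hF
  have hsource : ∀ u, ¬ F u s := indeg_eq_zero_iff.1 hs
  have hpred : ∀ u v w, F u w → F v w → u = v := fun u v w =>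
    indeg_le_one_iff.1 (hdeg w).2 u v
  have hnext : ∀ v, ∃ w, v ≠ t → F v w := fun v => by
    by_contra! h
    exact (h v).1 (ht v (outdeg_eq_zero_iff.2 fun w => (h w).2))
  choose next hnext using hnext
  let g : Option V → Option V :=
    fun w => w.elim (some s) fun v => if v = t then none else some (next v)
  have hg : Function.Injective g := by
    rintro (_ | u) (_ | v) h <;> grind
  refine ⟨.ofBijective g (Finite.injective_iff_bijective.1 hg), ?_⟩
  rintro (_ | v)
  · exact trivial
  · by_cases hv : v = t
    · simp [g, hv, cone]
    · simpa [g, hv, cone] using hFA _ _ (hnext v hv)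

end Factor

/-- a semicomplete multipartite digraph has a Hamilton directed path iff
it contains a 1-path-cycle factor. -/
theorem stmt13 {V : Type*} [Fintype V] [Nonempty V] {p : ℕ} (hp : 2 ≤ p)
    (A : V → V → Prop) (part : V → Fin p)
    (hsmd : IsSemicompleteMultipartite A part) (hne : Function.Surjective part) :
    (∃ f : Fin (Fintype.card V) ≃ V, IsHamDipath A f) ↔
      ∃ F : V → V → Prop, IsOnePathCycleFactor A F := by
  have hA := cone_or_cone_iff hsmd.2
  constructor
  · rintro ⟨f, hf⟩
    obtain ⟨σ, hσ⟩ := hf.exists_isCycleFactor_cone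
    exact ⟨_, hσ.isOnePathCycleFactor⟩
  · rintro ⟨F, hF⟩
    obtain ⟨σ, hσ⟩ := hF.exists_isCycleFactor_cone
    obtain ⟨τ, hτ, hcycle⟩ :=
      exists_isCycleFactor_forall_sameCycle hA (fun _ => cone_none_of_ne) hσ
    exact exists_isHamDipath_of_forall_sameCycle hτ hcycle
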